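/- arXiv:1504.02598 — 5 statements merged into one kernel-verified Lean document; each statement's English description precedes it below -/
import Mathlib

section
/- Let n and q be integers with n ≥ 1 and q ≥ 2, and let r be a prime dividing Φ*_n(q). Then n divides r − 1, i.e. r ≡ 1 (mod n). -/
/-- `Phi n q` is the `n`-th cyclotomic polynomial evaluated at `q`. -/
noncomputable def Phi (n q : ℕ) : ℕ :=
  ((Polynomial.cyclotomic n ℤ).eval (q : ℤ)).toNat

/-- `PhiStar n q` is the largest divisor of `Phi n q` that is coprime to
`∏_{k=1}^{n-1} (q^k - 1)` (an empty product is `1`). -/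
noncomputable def PhiStar (n q : ℕ) : ℕ :=
  sSup {m : ℕ | m ∣ Phi n q ∧ Nat.Coprime m (∏ k ∈ Finset.Ico 1 n, (q ^ k - 1))}

/-- Lemma 2(c): a prime divisor `r` of `Φ*_n(q)` satisfies `r ≡ 1 (mod n)`. -/
theorem prime_dvd_phiStar_mod (n q r : ℕ) (hn : 1 ≤ n) (hq : 2 ≤ q)
    (hr : r.Prime) (hdvd : r ∣ PhiStar n q) :
    n ∣ r - 1 := by
  have hq1 : (1 : ℤ) < (q : ℤ) := by exact_mod_cast hq
  have hpos : 0 < (Polynomial.cyclotomic n ℤ).eval (q : ℤ) :=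
    Polynomial.cyclotomic_pos' n hq1
  have hP : 0 < Phi n q := by
    unfold Phi
    omega
  have hmem : PhiStar n q ∈ {m : ℕ | m ∣ Phi n q ∧
      Nat.Coprime m (∏ k ∈ Finset.Ico 1 n, (q ^ k - 1))} := by
    apply Nat.sSup_mem
    · exact ⟨1, one_dvd _, Nat.coprime_one_left _⟩
    · exact ⟨Phi n q, fun m hm => Nat.le_of_dvd hP hm.1⟩
  obtain ⟨h1, h2⟩ := hmem
  haveI : Fact r.Prime := ⟨hr⟩
  have h3 : (r : ℤ) ∣ (Polynomial.cyclotomic n ℤ).eval (q : ℤ) := by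
    have h := Int.natCast_dvd_natCast.mpr (hdvd.trans h1)
    unfold Phi at h
    rwa [Int.toNat_of_nonneg hpos.le] at h
  have h4 : (r : ℤ) ∣ (q : ℤ) ^ n - 1 := by
    refine h3.trans ?_
    have h := Polynomial.eval_dvd (x := (q : ℤ)) (Polynomial.cyclotomic.dvd_X_pow_sub_one n ℤ)
    simpa using h
  have h5 : (q : ZMod r) ^ n = 1 := by
    have h := (ZMod.intCast_zmod_eq_zero_iff_dvd _ r).mpr h4
    push_cast at h
    exact sub_eq_zero.mp h
  have h6 : orderOf (q : ZMod r) = n := by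
    rw [orderOf_eq_iff hn]
    refine ⟨h5, fun m hm hm0 he => ?_⟩
    have h7 : r ∣ q ^ m - 1 := by
      rw [← ZMod.natCast_eq_zero_iff, Nat.cast_sub (Nat.one_le_pow _ _ (by omega))]
      push_cast
      rw [he, sub_self]
    have h8 : r ∣ ∏ k ∈ Finset.Ico 1 n, (q ^ k - 1) :=
      h7.trans (Finset.dvd_prod_of_mem (fun k => q ^ k - 1) (Finset.mem_Ico.mpr ⟨hm0, hm⟩))
    exact Nat.not_coprime_of_dvd_of_dvd hr.one_lt hdvd h8 h2
  rw [← h6]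
  apply ZMod.orderOf_dvd_card_sub_one
  intro h0
  rw [h0, zero_pow (by omega)] at h5
  exact zero_ne_one h5
end

section
/- For all integers n ≥ 2 and q ≥ 2, we have q^{φ(n)}/4 < Φ_n(q) < 4·q^{φ(n)}. -/
theorem aux_prod (N : ℕ) :
    (1 / 4 : ℝ) + (1 / 2) ^ (N + 2) ≤ ∏ d ∈ Finset.Icc 1 (N + 1), (1 - (1 / 2 : ℝ) ^ d) := by
  induction N with
  | zero => norm_num
  | succ k ih =>
    rw [Finset.prod_Icc_succ_top (by omega)]
    have hx0 : (0 : ℝ) < (1 / 2) ^ k := by positivity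
    have hx1 : (1 / 2 : ℝ) ^ k ≤ 1 := pow_le_one₀ (by norm_num) (by norm_num)
    have h2 : (0 : ℝ) ≤ 1 - (1 / 2) ^ (k + 1 + 1) := by
      rw [pow_succ, pow_succ]; linarith
    refine le_trans ?_ (mul_le_mul_of_nonneg_right ih h2)
    simp only [pow_succ]
    nlinarith

theorem aux_div (n q : ℕ) (hn : 1 ≤ n) (hq : 2 ≤ q) :
    (1 / 4 : ℝ) < ∏ d ∈ n.divisors, (1 - ((q : ℝ)⁻¹) ^ d) := by
  obtain ⟨N, rfl⟩ : ∃ N, n = N + 1 := ⟨n - 1, by omega⟩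
  have hq' : (2 : ℝ) ≤ q := by exact_mod_cast hq
  have hi : (q : ℝ)⁻¹ ≤ 1 / 2 := by
    rw [one_div]; exact inv_anti₀ (by norm_num) hq'
  have hi0 : (0 : ℝ) ≤ (q : ℝ)⁻¹ := by positivity
  have h0 : (0 : ℝ) < (1 / 2) ^ (N + 2) := by positivity
  have hhalf : ∀ d : ℕ, (0 : ℝ) ≤ 1 - (1 / 2) ^ d := fun d =>
    sub_nonneg.2 (pow_le_one₀ (by norm_num) (by norm_num))
  calc (1 / 4 : ℝ) < 1 / 4 + (1 / 2) ^ (N + 2) := by linarith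
    _ ≤ ∏ d ∈ Finset.Icc 1 (N + 1), (1 - (1 / 2 : ℝ) ^ d) := aux_prod N
    _ ≤ ∏ d ∈ (N + 1).divisors, (1 - (1 / 2 : ℝ) ^ d) := by
        have hsub : (N + 1).divisors ⊆ Finset.Icc 1 (N + 1) := by
          intro d hd
          rw [Finset.mem_Icc]
          exact ⟨Nat.pos_of_mem_divisors hd, Nat.divisor_le hd⟩
        rw [← Finset.prod_sdiff hsub]
        refine mul_le_of_le_one_left (Finset.prod_nonneg fun d _ => hhalf d) ?_
        refine Finset.prod_le_one (fun d _ => hhalf d) fun d _ => ?_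
        have : (0 : ℝ) ≤ (1 / 2) ^ d := by positivity
        linarith
    _ ≤ _ := by
        refine Finset.prod_le_prod (fun d _ => hhalf d) fun d _ => ?_
        have := pow_le_pow_left₀ hi0 hi d
        linarith

theorem aux_moebius (n q : ℕ) (hn : 1 ≤ n) (hq : 2 ≤ q) :
    ∏ d ∈ n.divisors, (1 - ((q : ℝ)⁻¹) ^ d) ^ (ArithmeticFunction.moebius (n / d)) =
      (Polynomial.cyclotomic n ℝ).eval (q : ℝ) / (q : ℝ) ^ n.totient := by
  have hq1 : (1 : ℝ) < q := by exact_mod_cast (by omega : 1 < q)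
  have hq0 : (q : ℝ) ≠ 0 := by positivity
  have key := (ArithmeticFunction.prod_eq_iff_prod_pow_moebius_eq_of_nonzero
    (f := fun n => (Polynomial.cyclotomic n ℝ).eval (q : ℝ) / (q : ℝ) ^ n.totient)
    (g := fun d => 1 - ((q : ℝ)⁻¹) ^ d)
    (fun m _ => (div_pos (Polynomial.cyclotomic_pos' m hq1) (by positivity)).ne')
    (fun m hm => (sub_pos.2 (pow_lt_one₀ (by positivity) (inv_lt_one_of_one_lt₀ hq1)
      (by omega))).ne')).1 ?_ n hn
  · rw [← key, Nat.prod_divisorsAntidiagonal'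
      (f := fun a b => (1 - ((q : ℝ)⁻¹) ^ b) ^ (ArithmeticFunction.moebius a))]
  · intro m hm
    rw [Finset.prod_div_distrib, Finset.prod_pow_eq_pow_sum, Nat.sum_totient,
      ← Polynomial.eval_prod, Polynomial.prod_cyclotomic_eq_X_pow_sub_one hm]
    simp
    field_simp

theorem aux_factor (a : ℝ) (k : ℕ) (h0 : 0 < a) (h1 : a ≤ 1) :
    a ≤ a ^ (ArithmeticFunction.moebius k) ∧ a ^ (ArithmeticFunction.moebius k) ≤ a⁻¹ := by
  have hi : 1 ≤ a⁻¹ := (one_le_inv₀ h0).2 h1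
  rcases ArithmeticFunction.moebius_eq_or k with h | h | h <;> rw [h] <;> simp <;>
    first | exact ⟨h1, hi⟩ | linarith

/-- Lemma 2(f): for all `n ≥ 2` and `q ≥ 2`, `q^φ(n)/4 < Φ_n(q) < 4·q^φ(n)`. -/
theorem phi_bounds (n q : ℕ) (hn : 2 ≤ n) (hq : 2 ≤ q) :
    (q : ℝ) ^ n.totient / 4 < (Phi n q : ℝ) ∧
    (Phi n q : ℝ) < 4 * (q : ℝ) ^ n.totient := by
  have hq1 : (1 : ℝ) < q := by exact_mod_cast (by omega : 1 < q)
  have hP : (Phi n q : ℝ) = (Polynomial.cyclotomic n ℝ).eval (q : ℝ) := by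
    have h1 : (0 : ℤ) ≤ (Polynomial.cyclotomic n ℤ).eval (q : ℤ) :=
      Polynomial.cyclotomic_nonneg n (by exact_mod_cast (by omega : 1 ≤ q))
    have h2 := Polynomial.cyclotomic.eval_apply (q : ℤ) n (Int.castRingHom ℝ)
    simp only [eq_intCast, Int.cast_natCast] at h2
    rw [h2, Phi, ← Int.cast_natCast, Int.toNat_of_nonneg h1]
  have hm := aux_moebius n q (by omega) hq
  have hd := aux_div n q (by omega) hq
  have hpos : ∀ d ∈ n.divisors, (0 : ℝ) < 1 - ((q : ℝ)⁻¹) ^ d := fun d hd =>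
    sub_pos.2 (pow_lt_one₀ (by positivity) (inv_lt_one_of_one_lt₀ hq1)
      (Nat.pos_of_mem_divisors hd).ne')
  have hle : ∀ d : ℕ, 1 - ((q : ℝ)⁻¹) ^ d ≤ 1 := fun d => by
    have : (0 : ℝ) ≤ ((q : ℝ)⁻¹) ^ d := by positivity
    linarith
  have hlow := Finset.prod_le_prod (fun d hd => (hpos d hd).le)
    (fun d hd => (aux_factor _ (n / d) (hpos d hd) (hle d)).1)
  have hup := Finset.prod_le_prod (fun d hd => (zpow_pos (hpos d hd)
    (ArithmeticFunction.moebius (n / d))).le)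
    (fun d hd => (aux_factor _ (n / d) (hpos d hd) (hle d)).2)
  rw [hm] at hlow hup
  rw [Finset.prod_inv_distrib] at hup
  have h4 : (∏ d ∈ n.divisors, (1 - ((q : ℝ)⁻¹) ^ d))⁻¹ < 4 := by
    rw [inv_lt_comm₀ (by linarith) (by norm_num)]
    linarith
  have hqp : (0 : ℝ) < (q : ℝ) ^ n.totient := by positivity
  rw [hP]
  constructor
  · have := (lt_div_iff₀ hqp).1 (hd.trans_le hlow)
    linarith
  · exact (div_lt_iff₀ hqp).1 (hup.trans_lt h4)
end

section
/- Let n and q be integers with n ≥ 2 and q ≥ 2. Then Φ*_n(q) equals the largest divisor of Φ_n(q) that is coprime to ∏_{k | n, k < n} Φ_k(q), the product being over the proper divisors k of n. -/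
theorem prod_Phi_aux (k q : ℕ) (hk : 0 < k) (hq : 2 ≤ q) :
    ∏ d ∈ k.divisors, Phi d q = q ^ k - 1 := by
  have h1 : ∀ d, ((Phi d q : ℕ) : ℤ) = (Polynomial.cyclotomic d ℤ).eval (q : ℤ) := by
    intro d
    unfold Phi
    exact Int.toNat_of_nonneg (Polynomial.cyclotomic_nonneg d (by exact_mod_cast (by omega : 1 ≤ q)))
  have h2 := congrArg (Polynomial.eval (q : ℤ)) (Polynomial.prod_cyclotomic_eq_X_pow_sub_one hk ℤ)
  rw [Polynomial.eval_prod] at h2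
  have h3 : 1 ≤ q ^ k := Nat.one_le_pow _ _ (by omega)
  zify [h3]
  simp only [h1, h2]
  simp

theorem Phi_dvd_aux (d k q : ℕ) (hk : 0 < k) (hq : 2 ≤ q) (hd : d ∣ k) :
    Phi d q ∣ q ^ k - 1 := by
  rw [← prod_Phi_aux k q hk hq]
  exact Finset.dvd_prod_of_mem _ (Nat.mem_divisors.2 ⟨hd, hk.ne'⟩)

theorem prime_dvd_aux (n q p : ℕ) (hn : 2 ≤ n) (hq : 2 ≤ q) (hp : p.Prime) (h : p ∣ Phi n q) :
    p ∣ (∏ k ∈ Finset.Ico 1 n, (q ^ k - 1)) ↔ p ∣ ∏ k ∈ Nat.properDivisors n, Phi k q := by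
  rw [hp.prime.dvd_finset_prod_iff, hp.prime.dvd_finset_prod_iff]
  constructor
  · rintro ⟨k, hk, hpk⟩
    rw [Finset.mem_Ico] at hk
    have hn' : p ∣ q ^ n - 1 := h.trans (Phi_dvd_aux n n q (by omega) hq dvd_rfl)
    have hg : p ∣ q ^ (Nat.gcd k n) - 1 := by
      rw [← Nat.pow_sub_one_gcd_pow_sub_one]
      exact Nat.dvd_gcd hpk hn'
    have hg0 : 0 < Nat.gcd k n := Nat.gcd_pos_of_pos_left _ (by omega)
    rw [← prod_Phi_aux _ q hg0 hq, hp.prime.dvd_finset_prod_iff] at hg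
    obtain ⟨d, hd, hpd⟩ := hg
    have hd' := Nat.dvd_of_mem_divisors hd
    refine ⟨d, Nat.mem_properDivisors.2 ⟨hd'.trans (Nat.gcd_dvd_right _ _), ?_⟩, hpd⟩
    have := Nat.le_of_dvd (by omega) (hd'.trans (Nat.gcd_dvd_left k n))
    omega
  · rintro ⟨k, hk, hpk⟩
    have hk0 : 0 < k := Nat.pos_of_mem_properDivisors hk
    exact ⟨k, Finset.mem_Ico.2 ⟨hk0, (Nat.mem_properDivisors.1 hk).2⟩,
      hpk.trans (Phi_dvd_aux k k q hk0 hq dvd_rfl)⟩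

/-- Lemma 4(a): `Φ*_n(q)` equals the largest divisor of `Φ_n(q)` coprime to
`∏_{k ∣ n, k < n} Φ_k(q)`. -/
theorem phiStar_eq_sSup_properDivisors (n q : ℕ) (hn : 2 ≤ n) (hq : 2 ≤ q) :
    PhiStar n q =
      sSup {m : ℕ | m ∣ Phi n q ∧
        Nat.Coprime m (∏ k ∈ Nat.properDivisors n, Phi k q)} := by
  unfold PhiStar
  congr 1
  ext m
  simp only [Set.mem_setOf_eq]
  refine and_congr_right fun hm => ?_
  rw [← not_iff_not, Nat.Prime.not_coprime_iff_dvd, Nat.Prime.not_coprime_iff_dvd]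
  refine exists_congr fun p => and_congr_right fun hp => and_congr_right fun hpm => ?_
  exact prime_dvd_aux n q p hn hq hp (hpm.trans hm)
end

section
/- Let n and q be integers with n > 2 and q ≥ 2, and let r be the largest prime divisor of n. Then Φ*_n(q) = Φ_n(q) if r does not divide Φ_n(q), and Φ*_n(q) = Φ_n(q)/r if r divides Φ_n(q). -/
open Polynomial in
lemma Phi_cast (n q : ℕ) (hq : 2 ≤ q) : ((Phi n q : ℕ) : ℤ) = (cyclotomic n ℤ).eval (q : ℤ) := by
  unfold Phi
  apply Int.toNat_of_nonneg
  exact cyclotomic_nonneg n (by exact_mod_cast (by omega : 1 ≤ q))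

open Polynomial in
lemma Phi_pos (n q : ℕ) (hq : 2 ≤ q) : 0 < Phi n q := by
  have h := cyclotomic_pos' n (R := ℤ) (x := (q : ℤ)) (by exact_mod_cast (by omega : 1 < q))
  rw [← Phi_cast n q hq] at h
  exact_mod_cast h

open Polynomial in
lemma prim_of_dvd (n q p : ℕ) (hn : 2 < n) (hq : 2 ≤ q) (hp : p.Prime) (h : p ∣ Phi n q) :
    ∃ a m : ℕ, ¬ p ∣ m ∧ n = p ^ a * m ∧ IsPrimitiveRoot (q : ZMod p) m := by
  haveI := Fact.mk hp
  obtain ⟨a, m, hm, rfl⟩ := Nat.exists_eq_pow_mul_and_not_dvd (n := n) (by omega) p hp.ne_one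
  refine ⟨a, m, hm, rfl, ?_⟩
  haveI : NeZero (m : ZMod p) := ⟨fun h0 => hm ((ZMod.natCast_eq_zero_iff m p).1 h0)⟩
  rw [← isRoot_cyclotomic_prime_pow_mul_iff_of_charP (p := p) (k := a)]
  have h1 : ((Phi (p ^ a * m) q : ℕ) : ZMod p) = 0 := (ZMod.natCast_eq_zero_iff _ p).2 h
  have h2 : (((Phi (p ^ a * m) q : ℕ) : ℤ) : ZMod p) = 0 := by exact_mod_cast h1
  rw [Phi_cast _ q hq] at h2
  rw [IsRoot.def, ← map_cyclotomic_int]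
  have h3 := Polynomial.eval_intCast_map (Int.castRingHom (ZMod p)) (cyclotomic (p ^ a * m) ℤ) (q : ℤ)
  rw [Int.cast_natCast] at h3
  rw [h3]
  simpa using h2

lemma dvd_pow_sub_one_iff (q p k : ℕ) (hq : 2 ≤ q) :
    p ∣ q ^ k - 1 ↔ (q : ZMod p) ^ k = 1 := by
  rw [← ZMod.natCast_eq_zero_iff, Nat.cast_sub (Nat.one_le_pow _ _ (by omega)), sub_eq_zero]
  simp

/-- A prime dividing both `n` and `Phi n q` is the largest prime divisor. -/
lemma eq_of_dvd (n q r p : ℕ) (hn : 2 < n) (hq : 2 ≤ q)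
    (hr : r.Prime) (hrn : r ∣ n) (hmax : ∀ p : ℕ, p.Prime → p ∣ n → p ≤ r)
    (hp : p.Prime) (hpn : p ∣ n) (h : p ∣ Phi n q) : p = r := by
  haveI := Fact.mk hp
  obtain ⟨a, m, hm, hnm, hprim⟩ := prim_of_dvd n q p hn hq hp h
  have hle := hmax p hp hpn
  by_contra hne
  have hrm : r ∣ m := by
    rw [hnm] at hrn
    rcases hr.dvd_mul.1 hrn with h1 | h1
    · exact absurd ((Nat.prime_dvd_prime_iff_eq hr hp).1 (hr.dvd_of_dvd_pow h1)) (Ne.symm hne)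
    · exact h1
  have hm0 : m ≠ 0 := by rintro rfl; simp at hm
  have hq0 : (q : ZMod p) ≠ 0 := hprim.isUnit hm0 |>.ne_zero
  have hmp : m ∣ p - 1 := hprim.dvd_of_pow_eq_one _ (ZMod.pow_card_sub_one_eq_one hq0)
  have h1 := Nat.le_of_dvd (by have := hp.two_le; omega) (hrm.trans hmp)
  have := hp.two_le
  omega

lemma coprime_of_not_dvd (n q p : ℕ) (hn : 2 < n) (hq : 2 ≤ q) (hp : p.Prime) (hpn : ¬ p ∣ n)
    (h : p ∣ Phi n q) : ¬ p ∣ ∏ k ∈ Finset.Ico 1 n, (q ^ k - 1) := by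
  obtain ⟨a, m, hm, hnm, hprim⟩ := prim_of_dvd n q p hn hq hp h
  have ha : a = 0 := by
    by_contra ha
    exact hpn (hnm ▸ (dvd_pow_self p ha).mul_right m)
  subst ha
  rw [pow_zero, one_mul] at hnm
  subst hnm
  rw [hp.prime.dvd_finset_prod_iff]
  rintro ⟨k, hk, hd⟩
  rw [Finset.mem_Ico] at hk
  have := Nat.le_of_dvd (by omega) (hprim.dvd_of_pow_eq_one k ((dvd_pow_sub_one_iff q p k hq).1 hd))
  omega

lemma pow_div_eq_one (n q r d : ℕ) (hn : 2 < n) (hq : 2 ≤ q) (hr : r.Prime) (hd : n = r * d)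
    (h : r ∣ Phi n q) : r ∣ q ^ d - 1 := by
  obtain ⟨a, m, hm, hnm, hprim⟩ := prim_of_dvd n q r hn hq hr h
  rw [dvd_pow_sub_one_iff q r d hq]
  have hmd : m ∣ d := by
    have : m ∣ r * d := by rw [← hd, hnm]; exact dvd_mul_left _ _
    exact (Nat.Coprime.symm ((Nat.Prime.coprime_iff_not_dvd hr).2 hm)).dvd_of_dvd_mul_left this
  obtain ⟨c, rfl⟩ := hmd
  rw [pow_mul, hprim.pow_eq_one, one_pow]

open Polynomial in
lemma Phi_dvd_geom (n q r d : ℕ) (hn : 2 < n) (hq : 2 ≤ q) (hr : r.Prime) (hd : n = r * d) :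
    ((Phi n q : ℕ) : ℤ) ∣ ∑ i ∈ Finset.range r, ((q : ℤ) ^ d) ^ i := by
  have hd0 : d ≠ 0 := by rintro rfl; omega
  have hmem : d ∈ n.properDivisors := by
    rw [Nat.mem_properDivisors]
    refine ⟨hd ▸ dvd_mul_left _ _, ?_⟩
    have := hr.two_le
    nlinarith [Nat.pos_of_ne_zero hd0]
  have h1 := X_pow_sub_one_mul_cyclotomic_dvd_X_pow_sub_one_of_dvd ℤ hmem
  have h2 := Polynomial.eval_dvd (x := (q : ℤ)) h1
  simp only [eval_mul, eval_sub, eval_pow, eval_X, eval_one] at h2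
  rw [← Phi_cast n q hq] at h2
  have h3 : (q : ℤ) ^ n - 1 = ((q : ℤ) ^ d - 1) * ∑ i ∈ Finset.range r, ((q : ℤ) ^ d) ^ i := by
    rw [mul_geom_sum, ← pow_mul, mul_comm d r, ← hd]
  rw [h3] at h2
  refine Int.dvd_of_mul_dvd_mul_left ?_ h2
  have : 1 < (q : ℤ) ^ d := one_lt_pow₀ (by exact_mod_cast (by omega : 1 < q)) hd0
  omega

lemma sq_not_dvd (n q r : ℕ) (hn : 2 < n) (hq : 2 ≤ q)
    (hr : r.Prime) (hrn : r ∣ n) (hmax : ∀ p : ℕ, p.Prime → p ∣ n → p ≤ r)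
    (h : r ∣ Phi n q) : ¬ r * r ∣ Phi n q := by
  intro hsq
  obtain ⟨d, hd⟩ := hrn
  have h1 := pow_div_eq_one n q r d hn hq hr hd h
  have h2 := Phi_dvd_geom n q r d hn hq hr hd
  have hone : 1 ≤ q ^ d := Nat.one_le_pow _ _ (by omega)
  have h1' : (r : ℤ) ∣ (q : ℤ) ^ d - 1 := by
    have : ((q ^ d - 1 : ℕ) : ℤ) = (q : ℤ) ^ d - 1 := by push_cast [hone]; rfl
    rw [← this]; exact_mod_cast h1
  have h3 : ((r * r : ℕ) : ℤ) ∣ ∑ i ∈ Finset.range r, ((q : ℤ) ^ d) ^ i :=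
    (Int.natCast_dvd_natCast.2 hsq).trans h2
  have hrp : Prime (r : ℤ) := Nat.prime_iff_prime_int.1 hr
  have hx : ¬ (r : ℤ) ∣ (q : ℤ) ^ d := by
    intro h4
    have h5 : (r : ℤ) ∣ 1 := by simpa using dvd_sub h4 h1'
    exact hrp.not_unit (isUnit_of_dvd_one h5)
  rcases hr.eq_two_or_odd' with h2r | hodd
  · subst h2r
    have hd1 : d ≠ 1 := by omega
    have hp := Nat.minFac_prime hd1
    have hev : 2 ∣ d := by
      have h6 := hmax _ hp (hd ▸ (Nat.minFac_dvd d).mul_left 2)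
      have h7 : d.minFac = 2 := le_antisymm h6 hp.two_le
      exact h7 ▸ Nat.minFac_dvd d
    obtain ⟨e, rfl⟩ := hev
    have hxo : Odd ((q : ℤ) ^ e) := by
      rw [← Int.not_even_iff_odd, even_iff_two_dvd]
      intro h8
      apply hx
      rw [mul_comm, pow_mul]
      exact_mod_cast dvd_pow h8 two_ne_zero
    have h9 := Int.sq_mod_four_eq_one_of_odd hxo
    rw [← pow_mul, mul_comm e 2] at h9
    simp only [Finset.sum_range_succ, Finset.sum_range_zero, pow_zero, pow_one] at h3
    push_cast at h3
    omega
  · have h4 := emultiplicity_geom_sum₂_eq_one hrp hodd (x := (q : ℤ) ^ d) (y := 1) h1' hx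
    simp only [one_pow, mul_one] at h4
    have h5 : (r : ℤ) ^ 2 ∣ ∑ i ∈ Finset.range r, ((q : ℤ) ^ d) ^ i := by
      rw [pow_two]; exact_mod_cast h3
    have h6 := le_emultiplicity_of_pow_dvd h5
    rw [h4] at h6
    exact absurd h6 (by decide)

/-- Lemma 4(b), case `n > 2`: with `r` the largest prime divisor of `n`,
`Φ*_n(q) = Φ_n(q)` if `r ∤ Φ_n(q)` and `Φ*_n(q) = Φ_n(q)/r` if `r ∣ Φ_n(q)`. -/
theorem phiStar_of_largest_prime (n q r : ℕ) (hn : 2 < n) (hq : 2 ≤ q)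
    (hr : r.Prime) (hrn : r ∣ n) (hmax : ∀ p : ℕ, p.Prime → p ∣ n → p ≤ r) :
    (¬ r ∣ Phi n q → PhiStar n q = Phi n q) ∧
    (r ∣ Phi n q → PhiStar n q = Phi n q / r) := by
  have hpos := Phi_pos n q hq
  set P := ∏ k ∈ Finset.Ico 1 n, (q ^ k - 1) with hP
  constructor
  · intro h
    have hg : IsGreatest {m : ℕ | m ∣ Phi n q ∧ Nat.Coprime m P} (Phi n q) := by
      refine ⟨⟨dvd_rfl, ?_⟩, fun m hm => Nat.le_of_dvd hpos hm.1⟩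
      refine Nat.coprime_of_dvd fun p hp hpA => ?_
      refine coprime_of_not_dvd n q p hn hq hp (fun hpn => ?_) hpA
      have := eq_of_dvd n q r p hn hq hr hrn hmax hp hpn hpA
      exact h (this ▸ hpA)
    exact hg.csSup_eq
  · intro h
    have hsq := sq_not_dvd n q r hn hq hr hrn hmax h
    have hrP : r ∣ P := by
      obtain ⟨d, hd⟩ := hrn
      have h1 := pow_div_eq_one n q r d hn hq hr hd h
      refine h1.trans (Finset.dvd_prod_of_mem (fun k => q ^ k - 1) ?_)
      have hd0 : 0 < d := Nat.pos_of_ne_zero (by rintro rfl; omega)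
      have := hr.two_le
      rw [Finset.mem_Ico]
      exact ⟨hd0, by nlinarith⟩
    obtain ⟨B, hB⟩ := h
    have hB0 : 0 < B := Nat.pos_of_ne_zero (by rintro rfl; omega)
    have hrB : ¬ r ∣ B := fun hh => hsq (hB ▸ mul_dvd_mul_left r hh)
    rw [hB, Nat.mul_div_cancel_left _ hr.pos]
    have hg : IsGreatest {m : ℕ | m ∣ Phi n q ∧ Nat.Coprime m P} B := by
      refine ⟨⟨hB ▸ dvd_mul_left _ _, ?_⟩, fun m hm => ?_⟩
      · refine Nat.coprime_of_dvd fun p hp hpB => ?_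
        have hpA : p ∣ Phi n q := hB ▸ hpB.mul_left r
        refine coprime_of_not_dvd n q p hn hq hp (fun hpn => ?_) hpA
        have := eq_of_dvd n q r p hn hq hr hrn hmax hp hpn hpA
        exact hrB (this ▸ hpB)
      · have hmr : Nat.Coprime m r := Nat.Coprime.coprime_dvd_right hrP hm.2
        exact Nat.le_of_dvd hB0 (hmr.dvd_of_dvd_mul_left (hB ▸ hm.1))
    exact hg.csSup_eq
end

section
/- For all real constants c > 0 and k > 0, the set of pairs of integers (n, q) with n ≥ 3, q ≥ 2 and Φ_n(q) ≤ c·n^k is finite. -/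
theorem odd_le_totient_sq (n : ℕ) : Odd n → n ≤ n.totient ^ 2 := by
  induction n using Nat.recOnPosPrimePosCoprime with
  | prime_pow p k hp hk =>
    intro ho
    have hp3 : 3 ≤ p := by
      have h2 := hp.two_le
      rcases h2.eq_or_lt with h | h
      · subst h
        rw [Nat.odd_pow_iff hk.ne'] at ho
        exact absurd ho (by decide)
      · exact h
    obtain ⟨j, rfl⟩ : ∃ j, k = j + 1 := ⟨k - 1, by omega⟩
    rw [Nat.totient_prime_pow_succ hp, mul_pow, pow_succ]
    obtain ⟨r, rfl⟩ : ∃ r, p = r + 1 := ⟨p - 1, by omega⟩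
    apply Nat.mul_le_mul
    · exact Nat.le_self_pow (by norm_num) _
    · simp only [Nat.add_sub_cancel]
      nlinarith
  | zero => intro h; exact absurd h (by decide)
  | one => intro _; simp
  | coprime a b ha hb hab iha ihb =>
    intro ho
    rw [Nat.odd_mul] at ho
    rw [Nat.totient_mul hab, mul_pow]
    exact Nat.mul_le_mul (iha ho.1) (ihb ho.2)

theorem le_two_mul_totient_sq (n : ℕ) (hn : n ≠ 0) : n ≤ 2 * n.totient ^ 2 := by
  obtain ⟨a, m, hm, rfl⟩ := Nat.exists_eq_two_pow_mul_odd hn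
  have h := odd_le_totient_sq m hm
  rw [Nat.totient_mul (Nat.Coprime.pow_left _ (Nat.coprime_two_left.2 hm))]
  rcases a with _ | j
  · simp; omega
  · rw [Nat.totient_prime_pow_succ Nat.prime_two]
    have h2 : 2 ^ j ≤ (2 ^ j) ^ 2 := Nat.le_self_pow (by norm_num) _
    have := Nat.mul_le_mul h2 h
    simp only [Nat.add_one_sub_one, mul_one, mul_pow]
    rw [pow_succ]
    nlinarith

theorem cyc_lower (n : ℕ) (hn : 0 < n) (q : ℝ) (hq : 2 ≤ q) :
    q ^ n.totient ≤ Real.exp 2 * (Polynomial.cyclotomic n ℝ).eval q := by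
  have hq0 : 0 < q := by linarith
  have hpos : ∀ d, 0 < (Polynomial.cyclotomic d ℝ).eval q :=
    fun d => Polynomial.cyclotomic_pos' d (by linarith)
  set f : ℕ → ℝ := fun d => Real.log ((Polynomial.cyclotomic d ℝ).eval q)
    - d.totient * Real.log q with hf
  set g : ℕ → ℝ := fun d => Real.log (1 - (q⁻¹) ^ d) with hg
  have hx : ∀ d : ℕ, 0 < d → (q⁻¹) ^ d ≤ (1 / 2 : ℝ) ^ d ∧ (q⁻¹) ^ d ≤ 1 / 2 ∧ 0 < (q⁻¹) ^ d := by
    intro d hd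
    have h1 : q⁻¹ ≤ 1 / 2 := by
      rw [one_div]; exact inv_anti₀ (by norm_num) hq
    have h2 : (q⁻¹) ^ d ≤ (1 / 2 : ℝ) ^ d := pow_le_pow_left₀ (by positivity) h1 d
    refine ⟨h2, h2.trans ?_, by positivity⟩
    exact pow_le_of_le_one (by norm_num) (by norm_num) hd.ne'
  have hsum : ∀ m > 0, ∑ d ∈ m.divisors, f d = g m := by
    intro m hm
    have hprod := congrArg (Polynomial.eval q) (Polynomial.prod_cyclotomic_eq_X_pow_sub_one hm ℝ)
    rw [Polynomial.eval_prod] at hprod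
    simp only [Polynomial.eval_sub, Polynomial.eval_pow, Polynomial.eval_X,
      Polynomial.eval_one] at hprod
    simp only [hf, hg, Finset.sum_sub_distrib]
    rw [← Real.log_prod (fun d _ => (hpos d).ne'), hprod, ← Finset.sum_mul, ← Nat.cast_sum,
      Nat.sum_totient, ← Real.log_pow, ← Real.log_div]
    · congr 1
      rw [inv_pow]
      field_simp
    · have : 1 < q ^ m := one_lt_pow₀ (by linarith) hm.ne'
      linarith
    · positivity
  have hmob := (ArithmeticFunction.sum_eq_iff_sum_smul_moebius_eq.1 hsum) n hn
  have hgb : ∀ d : ℕ, 0 < d → |g d| ≤ 2 * (1 / 2 : ℝ) ^ d := by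
    intro d hd
    obtain ⟨h1, h2, h3⟩ := hx d hd
    have hneg : g d ≤ 0 := Real.log_nonpos (by linarith) (by linarith)
    rw [abs_of_nonpos hneg]
    have h4 : 1 - (1 - (q⁻¹) ^ d)⁻¹ ≤ g d := Real.one_sub_inv_le_log_of_pos (by linarith)
    have h5 : (1 - (q⁻¹) ^ d)⁻¹ ≤ 1 + 2 * (q⁻¹) ^ d := by
      rw [inv_le_iff_one_le_mul₀ (by linarith)]
      nlinarith
    linarith
  have hlow : -2 ≤ f n := by
    have habs : |f n| ≤ 2 := by
      rw [← hmob]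
      refine (Finset.abs_sum_le_sum_abs _ _).trans ?_
      have hstep : ∀ x ∈ n.divisorsAntidiagonal,
          |ArithmeticFunction.moebius x.1 • g x.2| ≤ 2 * (1 / 2 : ℝ) ^ x.2 := by
        intro x hx'
        have hx2 : 0 < x.2 := by
          rw [Nat.mem_divisorsAntidiagonal] at hx'
          rcases Nat.eq_zero_or_pos x.2 with h | h
          · rw [h] at hx'; simp at hx'; omega
          · exact h
        rw [zsmul_eq_mul, abs_mul]
        have hm : |((ArithmeticFunction.moebius x.1 : ℤ) : ℝ)| ≤ 1 := by
          exact_mod_cast ArithmeticFunction.abs_moebius_le_one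
        calc _ ≤ 1 * |g x.2| := by gcongr
          _ ≤ _ := by rw [one_mul]; exact hgb _ hx2
      refine (Finset.sum_le_sum hstep).trans ?_
      rw [Nat.sum_divisorsAntidiagonal' (fun _ b => 2 * (1 / 2 : ℝ) ^ b), ← Finset.mul_sum]
      have hge : ∑ d ∈ n.divisors, (1 / 2 : ℝ) ^ d ≤ 1 := by
        have hdj : (0 : ℕ) ∉ n.divisors := by simp
        have := (summable_geometric_two).sum_le_tsum (insert 0 n.divisors)
          (fun i _ => by positivity)
        rw [Finset.sum_insert hdj, tsum_geometric_two] at this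
        simp at this ⊢
        linarith
      linarith
    exact (abs_le.1 habs).1
  have : (n.totient : ℝ) * Real.log q ≤ 2 + Real.log ((Polynomial.cyclotomic n ℝ).eval q) := by
    simp only [hf] at hlow
    linarith
  have h := Real.exp_le_exp.2 this
  rw [Real.exp_add, Real.exp_log (hpos n), ← Real.log_pow, Real.exp_log (by positivity)] at h
  exact h

theorem Phi_lower (n q : ℕ) (hn : 0 < n) (hq : 2 ≤ q) :
    (q : ℝ) ^ n.totient ≤ Real.exp 2 * (Phi n q : ℝ) := by
  have h := cyc_lower n hn q (by exact_mod_cast hq)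
  have h0 : 0 ≤ (Polynomial.cyclotomic n ℤ).eval (q : ℤ) :=
    (Polynomial.cyclotomic_pos' n (by exact_mod_cast (show 1 < q by omega))).le
  have h1 : (Phi n q : ℝ) = (Polynomial.cyclotomic n ℝ).eval (q : ℝ) := by
    have h2 : ((Phi n q : ℤ)) = (Polynomial.cyclotomic n ℤ).eval (q : ℤ) := Int.toNat_of_nonneg h0
    have h3 : ((Phi n q : ℕ) : ℝ) = ((Phi n q : ℤ) : ℝ) := by simp
    rw [h3, h2, ← Polynomial.map_cyclotomic_int n ℝ]
    have := Polynomial.eval_intCast_map (Int.castRingHom ℝ) (Polynomial.cyclotomic n ℤ) (q : ℤ)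
    simpa using this.symm
  rwa [h1]

/-- For all constants `c, k > 0`, the set of pairs `(n, q)` of integers with
`n ≥ 3`, `q ≥ 2` and `Φ_n(q) ≤ c·n^k` is finite. -/
theorem finite_phi_le (c k : ℝ) (hc : 0 < c) (hk : 0 < k) :
    {nq : ℕ × ℕ | 3 ≤ nq.1 ∧ 2 ≤ nq.2 ∧
      (Phi nq.1 nq.2 : ℝ) ≤ c * (nq.1 : ℝ) ^ k}.Finite := by
  set C : ℝ := Real.exp 2 * c * 2 ^ k with hC
  have hCpos : 0 < C := by positivity
  have hlit := isLittleO_rpow_exp_pos_mul_atTop (2 * k) (Real.log_pos one_lt_two)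
  have hev := hlit.def (show (0 : ℝ) < 1 / (2 * C) by positivity)
  obtain ⟨X, hX⟩ := Filter.eventually_atTop.1 hev
  obtain ⟨M, hM⟩ := exists_nat_ge X
  set N : ℕ := 2 * M ^ 2 with hN
  obtain ⟨Q, hQ⟩ := exists_nat_ge (Real.exp 2 * (c * (N : ℝ) ^ k))
  refine ((Set.finite_Iic N).prod (Set.finite_Iic Q)).subset ?_
  rintro ⟨n, q⟩ ⟨hn, hq, hle⟩
  simp only at hn hq hle
  have hlow := Phi_lower n q (by omega) hq
  have hup : (q : ℝ) ^ n.totient ≤ Real.exp 2 * (c * (n : ℝ) ^ k) :=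
    hlow.trans (by gcongr)
  have hq2 : (2 : ℝ) ≤ q := by exact_mod_cast hq
  have hnt := le_two_mul_totient_sq n (by omega)
  have htpos : 0 < n.totient := Nat.totient_pos.2 (by omega)
  have htM : n.totient < M := by
    by_contra! hcon
    have h1 := hX (n.totient : ℝ) (hM.trans (by exact_mod_cast hcon))
    rw [Real.norm_of_nonneg (by positivity), Real.norm_of_nonneg (by positivity),
      mul_comm (Real.log 2), ← Real.log_pow, Real.exp_log (by positivity)] at h1
    have h2 : (n : ℝ) ^ k ≤ 2 ^ k * (n.totient : ℝ) ^ (2 * k) := by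
      rw [Real.rpow_mul (by positivity), ← Real.mul_rpow (by norm_num) (by positivity)]
      apply Real.rpow_le_rpow (by positivity) _ hk.le
      rw [Real.rpow_two]
      exact_mod_cast hnt
    have h3 : (2 : ℝ) ^ n.totient ≤ C * (n.totient : ℝ) ^ (2 * k) := by
      calc (2 : ℝ) ^ n.totient ≤ (q : ℝ) ^ n.totient := by gcongr
        _ ≤ _ := hup
        _ ≤ Real.exp 2 * (c * (2 ^ k * (n.totient : ℝ) ^ (2 * k))) := by gcongr
        _ = _ := by rw [hC]; ring
    have h4 : C * (n.totient : ℝ) ^ (2 * k) ≤ C * (1 / (2 * C) * 2 ^ n.totient) := by gcongr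
    have h5 : C * (1 / (2 * C) * (2 : ℝ) ^ n.totient) = 2 ^ n.totient / 2 := by
      field_simp
    have h6 : (0 : ℝ) < 2 ^ n.totient := by positivity
    linarith
  have hnN : n ≤ N := hnt.trans (by rw [hN]; gcongr)
  refine ⟨hnN, ?_⟩
  have h7 : (q : ℝ) ≤ Q := by
    calc (q : ℝ) ≤ (q : ℝ) ^ n.totient := le_self_pow₀ (by linarith) htpos.ne'
      _ ≤ _ := hup
      _ ≤ Real.exp 2 * (c * (N : ℝ) ^ k) := by gcongr
      _ ≤ Q := hQ
  exact_mod_cast h7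
end
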